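/- Fix γ > 0, b₁ ∈ ℝ and set b₂ = 1 − b₁. Let A : ℝ² → ℂ and u : ℝ² → ℂ be smooth (infinitely differentiable) and fix (x, z) ∈ ℝ². For j ∈ {−2, −1, 0, 1, 2} define the point-weighted values ûⱼ(x, z; h): û₋₂ = b₁·u(x−2h, z) + (b₂/2)·[u(x−2h, z+2γh) + u(x−2h, z−2γh) − u(x, z−2γh) − u(x, z+2γh)]; û₋₁ = b₁·u(x−h, z) + (b₂/2)·[u(x−h, z+γh) + u(x−h, z−γh) − u(x, z−γh) − u(x, z+γh)]; û₀ = b₁·u(x, z); û₁ = b₁·u(x+h, z) + (b₂/2)·[u(x+h, z−γh) + u(x+h, z+γh) − u(x, z+γh) − u(x, z−γh)]; û₂ = b₁·u(x+2h, z) + (b₂/2)·[u(x+2h, z−2γh) + u(x+2h, z+2γh) − u(x, z+2γh) − u(x, z−2γh)]. Define L̃ₓu(x, z; h) = (1/h²)·[ −(9/8)·A(x−h/2, z)·((1/24)û₋₂ − (9/8)û₋₁ + (9/8)û₀ − (1/24)û₁) + (1/24)·A(x−3h/2, z)·(−(11/12)û₋₂ + (17/24)û₋₁ + (3/8)û₀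 − (5/24)û₁ + (1/24)û₂) − (1/24)·A(x+3h/2, z)·(−(1/24)û₋₂ + (5/24)û₋₁ − (3/8)û₀ − (17/24)û₁ + (11/12)û₂) + (9/8)·A(x+h/2, z)·((1/24)û₋₁ − (9/8)û₀ + (9/8)û₁ − (1/24)û₂) ]. Then L̃ₓu(x, z; h) = ∂/∂x(A·∂u/∂x)(x, z) + O(h⁴) as h → 0⁺. -/

import Mathlib

noncomputable section

/-- Point-weighted value `û` at the point `(xo, z)` relative to the center column `xc`,
with vertical half-width `s`:
`b₁·u(xo,z) + (b₂/2)·[u(xo,z+s) + u(xo,z−s) − u(xc,z−s) − u(xc,z+s)]` where `b₂ = 1 − b₁`. -/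
def hatVal (b₁ : ℝ) (u : ℝ × ℝ → ℂ) (xo xc z s : ℝ) : ℂ :=
  (b₁ : ℂ) * u (xo, z) + (((1 : ℂ) - (b₁ : ℂ)) / 2) *
    (u (xo, z + s) + u (xo, z - s) - u (xc, z - s) - u (xc, z + s))

/-- The fourth-order flux-form stencil applied to values `vm2, …, vp2`
with coefficient values `Am32, Am12, Ap12, Ap32` and step `h`. -/
def fluxStencil (Am32 Am12 Ap12 Ap32 vm2 vm1 v0 vp1 vp2 : ℂ) (h : ℝ) : ℂ :=
  (1 / (h : ℂ) ^ 2) *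
    ( -(9 / 8) * Am12 * ((1 / 24) * vm2 - (9 / 8) * vm1 + (9 / 8) * v0 - (1 / 24) * vp1)
      + (1 / 24) * Am32 * (-(11 / 12) * vm2 + (17 / 24) * vm1 + (3 / 8) * v0
          - (5 / 24) * vp1 + (1 / 24) * vp2)
      - (1 / 24) * Ap32 * (-(1 / 24) * vm2 + (5 / 24) * vm1 - (3 / 8) * v0
          - (17 / 24) * vp1 + (11 / 12) * vp2)
      + (9 / 8) * Ap12 * ((1 / 24) * vm1 - (9 / 8) * v0 + (9 / 8) * vp1 - (1 / 24) * vp2) )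

/-- The x-part `L̃ₓ` of the optimal point-weighting 17-point scheme. -/
def LxTilde (b₁ γ : ℝ) (A u : ℝ × ℝ → ℂ) (x z h : ℝ) : ℂ :=
  fluxStencil (A (x - 3 * h / 2, z)) (A (x - h / 2, z)) (A (x + h / 2, z))
    (A (x + 3 * h / 2, z))
    (hatVal b₁ u (x - 2 * h) x z (2 * γ * h)) (hatVal b₁ u (x - h) x z (γ * h))
    ((b₁ : ℂ) * u (x, z))
    (hatVal b₁ u (x + h) x z (γ * h)) (hatVal b₁ u (x + 2 * h) x z (2 * γ * h)) h

open Asymptotics Topology Filter in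
/-- Sixth-order Taylor expansion at zero. -/
def TExp (p : ℝ → ℂ) (c : ℕ → ℂ) : Prop :=
  (fun h : ℝ => p h - (c 0 + c 1 * h + c 2 * h ^ 2 + c 3 * h ^ 3 + c 4 * h ^ 4 + c 5 * h ^ 5))
    =O[𝓝 0] (fun h : ℝ => h ^ 6)

open Asymptotics Topology Filter in
lemma TExp.congr {p q : ℝ → ℂ} {c d : ℕ → ℂ} (hp : TExp p c) (h1 : ∀ h, q h = p h)
    (h2 : ∀ k, k < 6 → d k = c k) : TExp q d := by
  unfold TExp at *
  simp only [h1, h2 0 (by norm_num), h2 1 (by norm_num), h2 2 (by norm_num), h2 3 (by norm_num),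
    h2 4 (by norm_num), h2 5 (by norm_num)]
  exact hp

open Asymptotics Topology Filter in
lemma TExp.add {p q : ℝ → ℂ} {c d : ℕ → ℂ} (hp : TExp p c) (hq : TExp q d) :
    TExp (fun h => p h + q h) (fun k => c k + d k) := by
  unfold TExp at *
  refine (IsBigO.add hp hq).congr_left fun h => ?_
  ring

open Asymptotics Topology Filter in
lemma TExp.smul {p : ℝ → ℂ} {c : ℕ → ℂ} (a : ℂ) (hp : TExp p c) :
    TExp (fun h => a * p h) (fun k => a * c k) := by
  unfold TExp at *
  refine (IsBigO.const_mul_left hp a).congr_left fun h => ?_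
  ring

open Asymptotics Topology Filter in
lemma TExp.scale {p : ℝ → ℂ} {c : ℕ → ℂ} (a : ℝ) (hp : TExp p c) :
    TExp (fun h => p (a * h)) (fun k => c k * (a : ℂ) ^ k) := by
  unfold TExp at *
  have ht : Tendsto (fun h : ℝ => a * h) (𝓝 0) (𝓝 0) := by
    have : Continuous (fun h : ℝ => a * h) := by fun_prop
    simpa using this.tendsto 0
  have h1 := hp.comp_tendsto ht
  have h2 : ((fun h : ℝ => h ^ 6) ∘ (fun h : ℝ => a * h)) =O[𝓝 0] (fun h : ℝ => h ^ 6) := by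
    refine ((isBigO_refl (fun h : ℝ => h ^ 6) (𝓝 0)).const_mul_left (a ^ 6)).congr_left
      fun h => ?_
    simp only [Function.comp]; ring
  refine (h1.trans h2).congr_left fun h => ?_
  simp only [Function.comp]; push_cast; ring

open Asymptotics Topology Filter in
lemma TExp.mul {p q : ℝ → ℂ} {c d : ℕ → ℂ} (hp : TExp p c) (hq : TExp q d) :
    TExp (fun h => p h * q h)
      (fun k => ∑ i ∈ Finset.range (k + 1), c i * d (k - i)) := by
  unfold TExp at *
  have hb : ∀ f : ℝ → ℂ, Continuous f → f =O[𝓝 0] (fun _ : ℝ => (1 : ℝ)) := fun f hf =>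
    (hf.tendsto 0).isBigO_one ℝ
  have h6 : (fun h : ℝ => h ^ 6) =O[𝓝 0] (fun _ : ℝ => (1 : ℝ)) :=
    ((show Continuous (fun h : ℝ => h ^ 6) by fun_prop).tendsto 0).isBigO_one ℝ
  have hq1 : q =O[𝓝 0] (fun _ : ℝ => (1 : ℝ)) := by
    have := (hq.trans h6).add (hb (fun h : ℝ => d 0 + d 1 * h + d 2 * h ^ 2 + d 3 * h ^ 3
      + d 4 * h ^ 4 + d 5 * h ^ 5) (by fun_prop))
    refine this.congr_left fun h => ?_
    ring
  have t1 := hp.mul hq1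
  have t2 := (hb (fun h : ℝ => c 0 + c 1 * h + c 2 * h ^ 2 + c 3 * h ^ 3
      + c 4 * h ^ 4 + c 5 * h ^ 5) (by fun_prop)).mul hq
  have h6' : (fun h : ℝ => (h : ℂ) ^ 6) =O[𝓝 0] (fun h : ℝ => h ^ 6) := by
    refine IsBigO.of_bound 1 (Eventually.of_forall fun h => ?_)
    rw [norm_pow, norm_pow, Complex.norm_real, one_mul]
  have t3 := h6'.mul (hb (fun h : ℝ =>
      (c 1 * d 5 + c 2 * d 4 + c 3 * d 3 + c 4 * d 2 + c 5 * d 1)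
      + (c 2 * d 5 + c 3 * d 4 + c 4 * d 3 + c 5 * d 2) * h
      + (c 3 * d 5 + c 4 * d 4 + c 5 * d 3) * h ^ 2
      + (c 4 * d 5 + c 5 * d 4) * h ^ 3 + c 5 * d 5 * h ^ 4) (by fun_prop))
  simp only [mul_one, one_mul] at t1 t2 t3
  refine ((t1.add t2).add t3).congr_left fun h => ?_
  simp [Finset.sum_range_succ]
  ring

open Asymptotics Topology Filter in
lemma line_deriv1 {f : ℝ × ℝ → ℂ} (hf : ContDiff ℝ (⊤ : ℕ∞) f) (p v : ℝ × ℝ) (t : ℝ) :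
    HasDerivAt (fun t : ℝ => f (p + t • v)) (fderiv ℝ f (p + t • v) v) t := by
  have h1 : HasDerivAt (fun t : ℝ => p + t • v) v t := by
    simpa using ((hasDerivAt_id t).smul_const v).const_add p
  exact ((hf.differentiable (by simp)) (p + t • v)).hasFDerivAt.comp_hasDerivAt t h1

open Asymptotics Topology Filter in
lemma line_deriv2 {f : ℝ × ℝ → ℂ} (hf : ContDiff ℝ (⊤ : ℕ∞) f) (p v : ℝ × ℝ) (t : ℝ) :
    HasDerivAt (fun t : ℝ => fderiv ℝ f (p + t • v) v)
      (fderiv ℝ (fderiv ℝ f) (p + t • v) v v) t := by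
  have h1 : HasDerivAt (fun t : ℝ => p + t • v) v t := by
    simpa using ((hasDerivAt_id t).smul_const v).const_add p
  have hf' : ContDiff ℝ 1 (fderiv ℝ f) := 
    (contDiff_infty.1 hf 2).fderiv_right (by norm_num)
  have h2 := ((hf'.differentiable (by simp)) (p + t • v)).hasFDerivAt.comp_hasDerivAt t h1
  exact (h2.clm_apply (hasDerivAt_const t v)).congr_deriv (by simp)

open Asymptotics Topology Filter in
lemma line_exp {f : ℝ × ℝ → ℂ} (hf : ContDiff ℝ (⊤ : ℕ∞) f) (p v : ℝ × ℝ) :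
    ∃ c : ℕ → ℂ, TExp (fun t : ℝ => f (p + t • v)) c ∧ c 0 = f p ∧ c 1 = fderiv ℝ f p v ∧
      c 2 = fderiv ℝ (fderiv ℝ f) p v v / 2 := by
  set g : ℝ → ℂ := fun t : ℝ => f (p + t • v) with hg
  have hgs : ContDiff ℝ (6 : ℕ) g := by
    have : ContDiff ℝ (6 : ℕ) f := contDiff_infty.1 hf 6
    exact this.comp (by fun_prop)
  have d1 : deriv g = fun t => fderiv ℝ f (p + t • v) v :=
    funext fun t => (line_deriv1 hf p v t).deriv
  have d2 : deriv (deriv g) = fun t => fderiv ℝ (fderiv ℝ f) (p + t • v) v v := by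
    rw [d1]; exact funext fun t => (line_deriv2 hf p v t).deriv
  refine ⟨fun k => ((k.factorial : ℝ)⁻¹ : ℝ) • iteratedDeriv k g 0, ?_, ?_, ?_, ?_⟩
  · have h := (taylor_isLittleO_univ (x₀ := 0) hgs).isBigO
    simp only [sub_zero] at h
    unfold TExp
    have h6 : (fun h : ℝ => (((Nat.factorial 6 : ℕ) : ℝ)⁻¹ * h ^ 6) • iteratedDeriv 6 g 0)
        =O[𝓝 0] (fun h : ℝ => h ^ 6) := by
      refine IsBigO.of_bound (‖(((Nat.factorial 6 : ℕ) : ℝ)⁻¹)‖ * ‖iteratedDeriv 6 g 0‖)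
        (Eventually.of_forall fun h => ?_)
      rw [norm_smul, norm_mul]
      exact le_of_eq (by ring)
    refine (h.add h6).congr_left fun h => ?_
    rw [taylor_within_apply]
    simp only [Finset.sum_range_succ, Finset.sum_range_zero, iteratedDerivWithin_univ,
      Complex.real_smul, sub_zero]
    push_cast
    ring
  · simp [hg]
  · simp [iteratedDeriv_one, d1]
  · simp [iteratedDeriv_succ, iteratedDeriv_zero, d2]
    ring

open Asymptotics Topology Filter in
lemma stencil_exp {a g : ℝ → ℂ} {c d : ℕ → ℂ} (ha : TExp a c) (hg : TExp g d) :
    (fun h : ℝ => ( -(9 / 8) * a (-1/2*h) * ((1 / 24) * g (-2*h) - (9 / 8) * g (-1*h) + (9 / 8) * g 0 - (1 / 24) * g (1*h))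
      + (1 / 24) * a (-3/2*h) * (-(11 / 12) * g (-2*h) + (17 / 24) * g (-1*h) + (3 / 8) * g 0
          - (5 / 24) * g (1*h) + (1 / 24) * g (2*h))
      - (1 / 24) * a (3/2*h) * (-(1 / 24) * g (-2*h) + (5 / 24) * g (-1*h) - (3 / 8) * g 0
          - (17 / 24) * g (1*h) + (11 / 12) * g (2*h))
      + (9 / 8) * a (1/2*h) * ((1 / 24) * g (-1*h) - (9 / 8) * g 0 + (9 / 8) * g (1*h) - (1 / 24) * g (2*h)) )
      - (c 1 * d 1 + 2 * c 0 * d 2) * h ^ 2) =O[𝓝 0] (fun h : ℝ => h ^ 6) := by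
  have gm2 := hg.scale (-2)
  have gm1 := hg.scale (-1)
  have g0 := hg.scale 0
  have g1 := hg.scale 1
  have g2 := hg.scale 2
  have f1 := ((ha.scale (-1/2)).smul (-(9/8))).mul
    ((((gm2.smul (1/24)).add (gm1.smul (-(9/8)))).add (g0.smul (9/8))).add (g1.smul (-(1/24))))
  have f2 := ((ha.scale (-3/2)).smul (1/24)).mul
    (((((gm2.smul (-(11/12))).add (gm1.smul (17/24))).add (g0.smul (3/8))).add
      (g1.smul (-(5/24)))).add (g2.smul (1/24)))
  have f3 := ((ha.scale (3/2)).smul (-(1/24))).mul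
    (((((gm2.smul (-(1/24))).add (gm1.smul (5/24))).add (g0.smul (-(3/8)))).add
      (g1.smul (-(17/24)))).add (g2.smul (11/12)))
  have f4 := ((ha.scale (1/2)).smul (9/8)).mul
    ((((gm1.smul (1/24)).add (g0.smul (-(9/8)))).add (g1.smul (9/8))).add (g2.smul (-(1/24))))
  have F := ((f1.add f2).add f3).add f4
  have G := F.congr (q := _) (d := fun k => if k = 2 then c 1 * d 1 + 2 * c 0 * d 2 else 0)
    (fun h => rfl) (by
      intro k hk
      interval_cases k <;> simp [Finset.sum_range_succ] <;> ring)
  unfold TExp at G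
  refine G.congr_left fun h => ?_
  simp
  ring

/-- the x-part of the optimal point-weighting 17-point scheme
approximates ∂/∂x(A ∂u/∂x) with fourth-order accuracy. -/
theorem LxTilde_fourth_order
    (γ : ℝ) (hγ : 0 < γ) (b₁ : ℝ) (A u : ℝ × ℝ → ℂ)
    (hA : ContDiff ℝ (⊤ : ℕ∞) A) (hu : ContDiff ℝ (⊤ : ℕ∞) u) (x z : ℝ) :
    ∃ C δ : ℝ, 0 < C ∧ 0 < δ ∧ ∀ h : ℝ, 0 < h → h < δ →
      ‖LxTilde b₁ γ A u x z h
        - deriv (fun t => A (t, z) * deriv (fun s => u (s, z)) t) x‖ ≤ C * h ^ 4 := by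
  obtain ⟨c, hc, c0, c1, c2⟩ := line_exp hA (x, z) (1, 0)
  obtain ⟨w, hw, w0, w1, w2⟩ := line_exp hu (x, z) (1, 0)
  obtain ⟨p, hp, p0, p1, p2⟩ := line_exp hu (x, z) (1, γ)
  obtain ⟨q, hq, q0, q1, q2⟩ := line_exp hu (x, z) (1, -γ)
  obtain ⟨r, hr, r0, r1, r2⟩ := line_exp hu (x, z) (0, -γ)
  obtain ⟨s, hs, s0, s1, s2⟩ := line_exp hu (x, z) (0, γ)
  have hg := (hw.smul (b₁ : ℂ)).add (((((hp.add hq).add (hr.smul (-1))).add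
    (hs.smul (-1)))).smul (((1 : ℂ) - (b₁ : ℂ)) / 2))
  have hst := stencil_exp hc hg
  have e1 : ((1 : ℝ), γ) = (1, 0) + (0, γ) := by simp
  have e2 : ((1 : ℝ), -γ) = (1, 0) - (0, γ) := by simp
  have e3 : ((0 : ℝ), -γ) = -(0, γ) := by simp
  have hT : deriv (fun t => A (t, z) * deriv (fun s => u (s, z)) t) x =
      fderiv ℝ A (x, z) (1, 0) * fderiv ℝ u (x, z) (1, 0)
        + A (x, z) * fderiv ℝ (fderiv ℝ u) (x, z) (1, 0) (1, 0) := by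
    have k0 : ∀ t : ℝ, ((0 : ℝ), z) + t • ((1 : ℝ), (0 : ℝ)) = (t, z) := by
      intro t; simp
    have k1 := line_deriv1 hA (0, z) (1, 0) x
    have k2 : ∀ t, HasDerivAt (fun s => u (s, z)) (fderiv ℝ u (t, z) (1, 0)) t := by
      intro t
      have := line_deriv1 hu (0, z) (1, 0) t
      simpa only [k0] using this
    have k3 := line_deriv2 hu (0, z) (1, 0) x
    simp only [k0] at k1 k3
    have k4 : deriv (fun s => u (s, z)) = fun t => fderiv ℝ u (t, z) (1, 0) :=
      funext fun t => (k2 t).deriv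
    rw [k4]
    exact (k1.mul k3).deriv
  have hTc : fderiv ℝ A (x, z) (1, 0) * fderiv ℝ u (x, z) (1, 0)
        + A (x, z) * fderiv ℝ (fderiv ℝ u) (x, z) (1, 0) (1, 0) =
      c 1 * ((b₁ : ℂ) * w 1 + ((1 : ℂ) - (b₁ : ℂ)) / 2 * (p 1 + q 1 + -1 * r 1 + -1 * s 1))
      + 2 * c 0 * ((b₁ : ℂ) * w 2
        + ((1 : ℂ) - (b₁ : ℂ)) / 2 * (p 2 + q 2 + -1 * r 2 + -1 * s 2)) := by
    rw [c0, c1, w1, w2, p1, p2, q1, q2, r1, r2, s1, s2, e1, e2, e3]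
    simp only [map_add, map_sub, map_neg, _root_.add_apply,
      _root_.sub_apply, _root_.neg_apply]
    ring
  rw [← hTc, ← hT] at hst
  obtain ⟨C, hC, hb⟩ := hst.exists_pos
  rw [Asymptotics.isBigOWith_iff, Metric.eventually_nhds_iff] at hb
  obtain ⟨δ, hδ, hb⟩ := hb
  refine ⟨C, δ, hC, hδ, fun h h0 h1 => ?_⟩
  have key := @hb h (by simpa [abs_of_pos h0] using h1)
  have hne : (h : ℂ) ≠ 0 := by exact_mod_cast h0.ne'
  set T := deriv (fun t => A (t, z) * deriv (fun s => u (s, z)) t) x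
  have hmul : ‖(LxTilde b₁ γ A u x z h - T) * (h : ℂ) ^ 2‖ ≤ C * ‖h ^ 6‖ := by
    refine le_trans (le_of_eq ?_) key
    congr 1
    unfold LxTilde fluxStencil hatVal
    rw [sub_mul, mul_comm (1 / (h : ℂ) ^ 2), mul_assoc,
      one_div_mul_cancel (pow_ne_zero 2 hne), mul_one]
    simp only [Prod.smul_mk, Prod.mk_add_mk, smul_eq_mul, mul_zero, add_zero, mul_one, zero_mul]
    ring_nf
  rw [norm_mul, norm_pow, Complex.norm_real, Real.norm_eq_abs, abs_of_pos h0, Real.norm_eq_abs,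
    abs_of_pos (pow_pos h0 6)] at hmul
  have hp2 : 0 < h ^ 2 := pow_pos h0 2
  refine le_of_mul_le_mul_right ?_ hp2
  calc _ ≤ C * h ^ 6 := hmul
    _ = _ := by ring

end
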